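/- Run FISTA with step η = 1 and momentum β = (1−√α)/(1+√α), initialized at x_{−1} = x₀ = 0, on the over-regularized objective F_{2ρ} = f + g_B, and suppose there is a vertex set 𝓑 such that the spurious active sets Ã_k := supp(x_{k+1}) ∩ S_Aᶜ satisfy Ã_k ⊆ 𝓑 for all k ≥ 0. Then there is an absolute constant C > 0 such that the total spurious degree-weighted work satisfies Σ_{k=0}^{∞} vol(Ã_k) ≤ C·√(vol(𝓑))/(ρ·α^{3/2}). -/

import Mathlib

open Finset

noncomputable section

/-- Degree of vertex `i` in the (unweighted) graph with adjacency matrix `A`. -/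
def deg {n : ℕ} (A : Matrix (Fin n) (Fin n) ℝ) (i : Fin n) : ℝ := ∑ j, A i j

/-- The PageRank matrix `Q = αI + ((1−α)/2)·𝓛 = ((1+α)/2)·I − ((1−α)/2)·D^{-1/2} A D^{-1/2}`. -/
def Qmat {n : ℕ} (A : Matrix (Fin n) (Fin n) ℝ) (α : ℝ) : Matrix (Fin n) (Fin n) ℝ :=
  fun i j => (if i = j then (1 + α) / 2 else 0)
    - ((1 - α) / 2) * A i j / (Real.sqrt (deg A i) * Real.sqrt (deg A j))

/-- Smooth PageRank objective `f(x) = (1/2)⟨x, Qx⟩ − α⟨D^{-1/2} e_v, x⟩` with seed vertex `v`. -/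
def fPR {n : ℕ} (A : Matrix (Fin n) (Fin n) ℝ) (α : ℝ) (v : Fin n) (x : Fin n → ℝ) : ℝ :=
  (1 / 2) * (∑ i, x i * (Qmat A α).mulVec x i) - α * (x v / Real.sqrt (deg A v))

/-- Gradient of `fPR`: `∇f(x) = Qx − α·D^{-1/2} e_v`. -/
def gradf {n : ℕ} (A : Matrix (Fin n) (Fin n) ℝ) (α : ℝ) (v : Fin n) (x : Fin n → ℝ) :
    Fin n → ℝ :=
  fun i => (Qmat A α).mulVec x i - α * (if i = v then 1 / Real.sqrt (deg A v) else 0)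

/-- Weighted ℓ1 norm `‖D^{1/2} x‖₁ = ∑ i, √(d i)·|x i|`. -/
def l1w {n : ℕ} (A : Matrix (Fin n) (Fin n) ℝ) (x : Fin n → ℝ) : ℝ :=
  ∑ i, Real.sqrt (deg A i) * |x i|

/-- ℓ1-regularized PageRank objective `F_ρ(x) = f(x) + αρ‖D^{1/2}x‖₁`. -/
def Freg {n : ℕ} (A : Matrix (Fin n) (Fin n) ℝ) (α : ℝ) (v : Fin n) (ρ : ℝ)
    (x : Fin n → ℝ) : ℝ :=
  fPR A α v x + α * ρ * l1w A x

/-- Coordinatewise soft-thresholding at levels `t·√(d i)`: this is the proximal map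
`prox_{ηg}` of `g(x) = cαρ‖D^{1/2}x‖₁` with `t = η·c·α·ρ`. -/
def softT {n : ℕ} (A : Matrix (Fin n) (Fin n) ℝ) (t : ℝ) (w : Fin n → ℝ) : Fin n → ℝ :=
  fun i => Real.sign (w i) * max (|w i| - t * Real.sqrt (deg A i)) 0

/-- Euclidean norm on `Fin n → ℝ`. -/
def enorm {n : ℕ} (x : Fin n → ℝ) : ℝ := Real.sqrt (∑ i, (x i) ^ 2)

open Classical in
/-- Degree-weighted volume of a vertex set: `vol(S) = ∑_{i ∈ S} d i`. -/
def volS {n : ℕ} (A : Matrix (Fin n) (Fin n) ℝ) (S : Set (Fin n)) : ℝ :=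
  ∑ i ∈ Finset.univ.filter (fun i => i ∈ S), deg A i

/-- Neighbor set of a vertex. -/
def nbr {n : ℕ} (A : Matrix (Fin n) (Fin n) ℝ) (i : Fin n) : Set (Fin n) := {j | A i j ≠ 0}

/-- Vertex boundary of `S`: vertices outside `S` with a neighbor in `S`. -/
def bdry {n : ℕ} (A : Matrix (Fin n) (Fin n) ℝ) (S : Set (Fin n)) : Set (Fin n) :=
  {j | j ∉ S ∧ ∃ i ∈ S, A j i ≠ 0}

/-- `A` is the adjacency matrix of a finite undirected unweighted loopless graph
with all degrees positive. -/
structure IsGraph {n : ℕ} (A : Matrix (Fin n) (Fin n) ℝ) : Prop where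
  symm : ∀ i j, A i j = A j i
  zero_one : ∀ i j, A i j = 0 ∨ A i j = 1
  loopless : ∀ i, A i i = 0
  deg_pos : ∀ i, 0 < deg A i

/-!
`Q` has nonpositive off-diagonal entries, so the minimizers satisfy `0 ≤ xB ≤ xA`, and at a
coordinate `i` with `xA i = 0` the gradient of `f` at `xB` is at most `αρ√dᵢ` in absolute value.
FISTA activates `i` only if the prox input exceeds `2αρ√dᵢ`, which forces `(1 - Q)(yₖ - xB)` to have
`i`-th entry at least `αρ√dᵢ`. Squaring and summing over the spurious set turns this margin into
`αρ √(vol Ãₖ) ≤ ‖yₖ - xB‖`. By confinement `vol Ãₖ ≤ √(vol 𝓑) √(vol Ãₖ)`, and the linear convergence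
`‖yₖ - xB‖ ≲ (1 - √α) ^ (k / 2)`, which follows from the one-step decay of a Lyapunov function,
makes the total work a geometric series.
-/

open Matrix WithLp
open scoped RealInnerProductSpace MatrixOrder

section ProximalGradient

variable {E : Type*} [NormedAddCommGroup E] [InnerProductSpace ℝ E]
  {F : E → ℝ} {T : E → E} {μ θ : ℝ} {s : E}

/-- `T` satisfies the fundamental prox-gradient inequality for the `μ`-strongly convex objective
`F`, with step size normalized to `1`. The analysis of FISTA uses no other property of `F`
and `T`. -/
def IsProxGradMap (F : E → ℝ) (μ : ℝ) (T : E → E) : Prop :=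
  ∀ y z, F (T y) + ⟪y - T y, z - y⟫ + ‖y - T y‖ ^ 2 / 2 + μ / 2 * ‖z - y‖ ^ 2 ≤ F z

/-- FISTA with constant momentum `β` for the map `T`: `x` are the iterates and `y` the
extrapolated points, the convention `x₋₁ = x₀` being encoded as `y₀ = x₀`. -/
structure IsFISTA {V : Type*} [AddCommGroup V] [Module ℝ V] (T : V → V) (β : ℝ)
    (x y : ℕ → V) : Prop where
  y_zero : y 0 = x 0
  x_succ : ∀ k, x (k + 1) = T (y k)
  y_succ : ∀ k, y (k + 1) = x (k + 1) + β • (x (k + 1) - x k)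

/-- Lyapunov function of FISTA for a `θ ^ 2`-strongly convex objective, at an iterate `x` with
extrapolated point `y` and reference point `s`. The point `y + θ⁻¹ • (y - x)` is the
"estimate sequence" of Nesterov's method. -/
def fistaEnergy (F : E → ℝ) (θ : ℝ) (s x y : E) : ℝ :=
  F x - F s + θ ^ 2 / 2 * ‖y + θ⁻¹ • (y - x) - s‖ ^ 2

lemma isProxGradMap_comp_sub {f g : E → ℝ} {f' P : E → E}
    (hlower : ∀ y z, f y + ⟪f' y, z - y⟫ + μ / 2 * ‖z - y‖ ^ 2 ≤ f z)
    (hupper : ∀ y z, f z ≤ f y + ⟪f' y, z - y⟫ + ‖z - y‖ ^ 2 / 2)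
    (hprox : ∀ w z, g (P w) + ⟪w - P w, z - P w⟫ ≤ g z) :
    IsProxGradMap (fun x => f x + g x) μ (fun y => P (y - f' y)) := by
  intro y z
  dsimp only
  set p := P (y - f' y)
  have hinner : ⟪y - f' y - p, z - p⟫ =
      ⟪y - p, z - y⟫ + ‖y - p‖ ^ 2 - ⟪f' y, z - y⟫ + ⟪f' y, p - y⟫ := by
    simp only [← real_inner_self_eq_norm_sq, inner_sub_left, inner_sub_right]
    ring
  have hp := hprox (y - f' y) z
  have hup := hupper y p
  rw [norm_sub_rev p y] at hup
  linarith [hlower y z]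

namespace IsProxGradMap

lemma apply_eq_of_forall_le (hT : IsProxGradMap F μ T) (hs : ∀ z, F s ≤ F z) : T s = s := by
  have h := hT s s
  simp only [sub_self, inner_zero_right, norm_zero] at h
  have hnorm : ‖s - T s‖ ^ 2 = 0 :=
    le_antisymm (by linarith [hs (T s)]) (sq_nonneg _)
  exact (sub_eq_zero.1 (norm_eq_zero.1 (pow_eq_zero_iff two_ne_zero |>.1 hnorm))).symm

lemma add_norm_sub_sq_le (hT : IsProxGradMap F μ T) (hs : ∀ z, F s ≤ F z) (z : E) :
    F s + μ / 2 * ‖z - s‖ ^ 2 ≤ F z := by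
  simpa [hT.apply_eq_of_forall_le hs] using hT s z

-- The point `(1 - θ) • (z - s) + θ • (y - s)`, with `z` the estimate sequence, is on the one hand
-- a convex combination and on the other `-θ⁻¹` times the combination of the two test directions
-- `x - y` and `s - y` in the prox-gradient inequality.
lemma fistaEnergy_le (hT : IsProxGradMap F (θ ^ 2) T) (hθ : 0 < θ) (hθ1 : θ ≤ 1) (s x y : E) :
    fistaEnergy F θ s (T y) (T y + ((1 - θ) / (1 + θ)) • (T y - x)) ≤
      (1 - θ) * fistaEnergy F θ s x y := by
  set p := T y with hp
  set z := y + θ⁻¹ • (y - x) with hz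
  set u := (1 - θ) • (z - s) + θ • (y - s) with hu
  have hnext : p + ((1 - θ) / (1 + θ)) • (p - x)
      + θ⁻¹ • (p + ((1 - θ) / (1 + θ)) • (p - x) - p) - s = u - θ⁻¹ • (y - p) := by
    rw [hu, hz]
    match_scalars <;> field_simp <;> ring
  have hcomb : θ • u = -((1 - θ) • (x - y) + θ • (s - y)) := by
    rw [hu, hz]
    match_scalars <;> field_simp <;> ring
  have hcross : θ * ⟪u, y - p⟫ = -((1 - θ) * ⟪y - p, x - y⟫ + θ * ⟪y - p, s - y⟫) := by
    rw [← real_inner_smul_left, hcomb, real_inner_comm, inner_neg_right, inner_add_right,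
      real_inner_smul_right, real_inner_smul_right]
  have hsq : θ ^ 2 / 2 * ‖u - θ⁻¹ • (y - p)‖ ^ 2 =
      θ ^ 2 / 2 * ‖u‖ ^ 2 - θ * ⟪u, y - p⟫ + ‖y - p‖ ^ 2 / 2 := by
    rw [norm_sub_sq_real, real_inner_smul_right, norm_smul, Real.norm_eq_abs, mul_pow, sq_abs]
    field_simp
  have hconv : ‖u‖ ^ 2 ≤ (1 - θ) * ‖z - s‖ ^ 2 + θ * ‖y - s‖ ^ 2 :=
    (convexOn_univ_norm.pow (fun _ _ => norm_nonneg _) 2).2 trivial trivial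
      (sub_nonneg.2 hθ1) hθ.le (sub_add_cancel 1 θ)
  have hx := mul_le_mul_of_nonneg_left (hT y x) (sub_nonneg.2 hθ1)
  have hs := mul_le_mul_of_nonneg_left (hT y s) hθ.le
  have hdrop : 0 ≤ (1 - θ) * (θ ^ 2 / 2 * ‖x - y‖ ^ 2) :=
    mul_nonneg (sub_nonneg.2 hθ1) (by positivity)
  rw [norm_sub_rev s y] at hs
  rw [← hp] at hx hs
  have hconv' := mul_le_mul_of_nonneg_left hconv (by positivity : 0 ≤ θ ^ 2 / 2)
  unfold fistaEnergy
  rw [hnext, hsq, hcross]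
  linarith

end IsProxGradMap

namespace IsFISTA

lemma map {V W : Type*} [AddCommGroup V] [Module ℝ V] [AddCommGroup W] [Module ℝ W]
    {T : V → V} {β : ℝ} {x y : ℕ → V} (h : IsFISTA T β x y) (L : V ≃ₗ[ℝ] W) :
    IsFISTA (fun w => L (T (L.symm w))) β (fun k => L (x k)) (fun k => L (y k)) where
  y_zero := congrArg L h.y_zero
  x_succ k := by simp [h.x_succ]
  y_succ k := by simp [h.y_succ]

variable {x y : ℕ → E}

lemma fistaEnergy_le (h : IsFISTA T ((1 - θ) / (1 + θ)) x y) (hT : IsProxGradMap F (θ ^ 2) T)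
    (hθ : 0 < θ) (hθ1 : θ ≤ 1) (s : E) (k : ℕ) :
    fistaEnergy F θ s (x k) (y k) ≤ (1 - θ) ^ k * fistaEnergy F θ s (x 0) (y 0) := by
  induction k with
  | zero => simp
  | succ k ih =>
    rw [h.y_succ, h.x_succ, pow_succ', mul_assoc]
    exact (hT.fistaEnergy_le hθ hθ1 s (x k) (y k)).trans
      (mul_le_mul_of_nonneg_left ih (sub_nonneg.2 hθ1))

lemma norm_x_sub_le (h : IsFISTA T ((1 - θ) / (1 + θ)) x y) (hT : IsProxGradMap F (θ ^ 2) T)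
    (hθ : 0 < θ) (hθ1 : θ ≤ 1) (hs : ∀ z, F s ≤ F z) (k : ℕ) :
    ‖x k - s‖ ≤ 2 * √(F (x 0) - F s) / θ * √(1 - θ) ^ k := by
  have hr : 0 ≤ 1 - θ := sub_nonneg.2 hθ1
  have hinit : fistaEnergy F θ s (x 0) (y 0) ≤ 2 * (F (x 0) - F s) := by
    simp only [fistaEnergy, h.y_zero, sub_self, smul_zero, add_zero]
    linarith [hT.add_norm_sub_sq_le hs (x 0)]
  have hdist : θ ^ 2 / 2 * ‖x k - s‖ ^ 2 ≤ fistaEnergy F θ s (x k) (y k) := by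
    have : 0 ≤ θ ^ 2 / 2 * ‖y k + θ⁻¹ • (y k - x k) - s‖ ^ 2 := by positivity
    unfold fistaEnergy
    linarith [hT.add_norm_sub_sq_le hs (x k)]
  have hdecay : θ ^ 2 / 2 * ‖x k - s‖ ^ 2 ≤ (1 - θ) ^ k * (2 * (F (x 0) - F s)) :=
    (hdist.trans (h.fistaEnergy_le hT hθ hθ1 s k)).trans
      (mul_le_mul_of_nonneg_left hinit (pow_nonneg hr k))
  refine le_of_sq_le_sq ?_ (by positivity)
  rw [mul_pow, div_pow, mul_pow, Real.sq_sqrt (sub_nonneg.2 (hs _)), pow_right_comm,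
    Real.sq_sqrt hr, div_mul_eq_mul_div, le_div_iff₀ (by positivity)]
  linarith

lemma norm_y_sub_le (h : IsFISTA T ((1 - θ) / (1 + θ)) x y) (hT : IsProxGradMap F (θ ^ 2) T)
    (hθ : 0 < θ) (hθ1 : θ ≤ 1) (hs : ∀ z, F s ≤ F z) (k : ℕ) :
    ‖y k - s‖ ≤ 6 * √(F (x 0) - F s) / θ * √(1 - θ) ^ k := by
  have hx := h.norm_x_sub_le hT hθ hθ1 hs
  set M := √(F (x 0) - F s) / θ with hM
  have hM0 : 0 ≤ M := by positivity
  simp only [mul_div_assoc, ← hM] at hx ⊢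
  cases k with
  | zero =>
    rw [h.y_zero]
    linarith [hx 0, pow_zero √(1 - θ)]
  | succ k =>
    have hr : 0 ≤ 1 - θ := sub_nonneg.2 hθ1
    set β := (1 - θ) / (1 + θ)
    set r := √(1 - θ)
    have hβ0 : 0 ≤ β := by positivity
    have hβr : β ≤ r :=
      (div_le_self hr (by linarith)).trans (Real.le_sqrt_of_sq_le (by nlinarith))
    have hβ1 : β ≤ 1 := hβr.trans (Real.sqrt_le_one.2 (by linarith))
    have hsplit : y (k + 1) - s = (1 + β) • (x (k + 1) - s) - β • (x k - s) := by
      rw [h.y_succ]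
      module
    calc ‖y (k + 1) - s‖ ≤ (1 + β) * ‖x (k + 1) - s‖ + β * ‖x k - s‖ := by
          rw [hsplit]
          refine (norm_sub_le _ _).trans_eq ?_
          rw [norm_smul_of_nonneg (by positivity), norm_smul_of_nonneg hβ0]
      _ ≤ 2 * (2 * M * r ^ (k + 1)) + r * (2 * M * r ^ k) := by
          gcongr
          · linarith
          · exact hx (k + 1)
          · exact hx k
      _ = 6 * M * r ^ (k + 1) := by ring

end IsFISTA

end ProximalGradient

section SoftThreshold

/-- Scalar soft-thresholding, the proximal map of `τ * |·|`. -/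
def softThreshold (τ w : ℝ) : ℝ := Real.sign w * max (|w| - τ) 0

variable {τ w z : ℝ}

lemma softThreshold_eq_zero (h : |w| ≤ τ) : softThreshold τ w = 0 := by
  rw [softThreshold, max_eq_right (sub_nonpos.2 h), mul_zero]

lemma softThreshold_of_lt (h : τ < w) (hτ : 0 ≤ τ) : softThreshold τ w = w - τ := by
  have hw : 0 < w := hτ.trans_lt h
  rw [softThreshold, Real.sign_of_pos hw, abs_of_pos hw, one_mul, max_eq_left (sub_nonneg.2 h.le)]

lemma softThreshold_of_lt_neg (h : w < -τ) (hτ : 0 ≤ τ) : softThreshold τ w = w + τ := by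
  have hw : w < 0 := h.trans_le (neg_nonpos.2 hτ)
  rw [softThreshold, Real.sign_of_neg hw, abs_of_neg hw, max_eq_left (by linarith)]
  ring

lemma abs_sub_softThreshold_le (hτ : 0 ≤ τ) : |w - softThreshold τ w| ≤ τ := by
  rcases le_or_gt |w| τ with h | h
  · rwa [softThreshold_eq_zero h, sub_zero]
  · rcases lt_abs.1 h with h | h
    · rw [softThreshold_of_lt h hτ, sub_sub_cancel, abs_of_nonneg hτ]
    · rw [softThreshold_of_lt_neg (lt_neg.1 h) hτ, sub_add_cancel_left, abs_neg, abs_of_nonneg hτ]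

lemma sub_softThreshold_mul_self (hτ : 0 ≤ τ) :
    (w - softThreshold τ w) * softThreshold τ w = τ * |softThreshold τ w| := by
  rcases le_or_gt |w| τ with h | h
  · rw [softThreshold_eq_zero h, mul_zero, abs_zero, mul_zero]
  · rcases lt_abs.1 h with h | h
    · rw [softThreshold_of_lt h hτ, abs_of_pos (sub_pos.2 h), sub_sub_cancel]
    · have h := lt_neg.1 h
      rw [softThreshold_of_lt_neg h hτ, abs_of_neg (by linarith), sub_add_cancel_left, neg_mul_comm]

lemma mul_abs_softThreshold_add_le (hτ : 0 ≤ τ) :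
    τ * |softThreshold τ w| + (w - softThreshold τ w) * (z - softThreshold τ w) ≤ τ * |z| := by
  calc τ * |softThreshold τ w| + (w - softThreshold τ w) * (z - softThreshold τ w)
      = (w - softThreshold τ w) * z := by rw [← sub_softThreshold_mul_self hτ]; ring
    _ ≤ |w - softThreshold τ w| * |z| := (le_abs_self _).trans_eq (abs_mul _ _)
    _ ≤ τ * |z| := by gcongr; exact abs_sub_softThreshold_le hτ

end SoftThreshold

section LoewnerOrder

variable {ι : Type*} [DecidableEq ι] {Q : Matrix ι ι ℝ} {μ : ℝ}

lemma isSymm_of_le_one (hQ1 : Q ≤ 1) : Q.IsSymm := by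
  simpa [IsHermitian, conjTranspose_eq_transpose_of_trivial, IsSymm]
    using (le_iff.1 hQ1).isHermitian

lemma posDef_of_smul_one_le (hμ0 : 0 < μ) (hμ : μ • 1 ≤ Q) : Q.PosDef := by
  simpa using (PosDef.one.smul hμ0).add_posSemidef (le_iff.1 hμ)

end LoewnerOrder

section L1Quadratic

variable {ι : Type*} [Fintype ι] {Q : Matrix ι ι ℝ} {b w w' s a u y : ι → ℝ} {μ : ℝ}

/-- The `ℓ¹`-regularized quadratic `½⟨x, Qx⟩ - ⟨b, x⟩ + ∑ i, wᵢ|xᵢ|`. -/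
def l1Quadratic (Q : Matrix ι ι ℝ) (b w x : ι → ℝ) : ℝ :=
  (x ⬝ᵥ Q *ᵥ x / 2 - b ⬝ᵥ x) + ∑ i, w i * |x i|

/-- The prox-gradient map of `l1Quadratic Q b w` with unit step. -/
def proxGradL1 (Q : Matrix ι ι ℝ) (b w y : ι → ℝ) : ι → ℝ :=
  fun i => softThreshold (w i) (y i - (Q *ᵥ y - b) i)

/-- First-order optimality conditions of `l1Quadratic Q b w` at `s`. The two fields say that
`-(Q *ᵥ s - b)` is a subgradient of `∑ i, wᵢ|xᵢ|` at `s`. -/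
structure IsKKTPoint (Q : Matrix ι ι ℝ) (b w s : ι → ℝ) : Prop where
  abs_grad_le : ∀ i, |(Q *ᵥ s - b) i| ≤ w i
  grad_mul_self : ∀ i, (Q *ᵥ s - b) i * s i = -(w i * |s i|)

lemma l1Quadratic_zero : l1Quadratic Q b w 0 = 0 := by
  simp [l1Quadratic]

lemma dotProduct_mulVec_comm_of_isSymm (hQ : Q.IsSymm) (x z : ι → ℝ) :
    x ⬝ᵥ Q *ᵥ z = z ⬝ᵥ Q *ᵥ x := by
  rw [dotProduct_mulVec, ← mulVec_transpose, hQ.eq, dotProduct_comm]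

lemma quadratic_expansion (hQ : Q.IsSymm) (b y z : ι → ℝ) :
    z ⬝ᵥ Q *ᵥ z / 2 - b ⬝ᵥ z = (y ⬝ᵥ Q *ᵥ y / 2 - b ⬝ᵥ y) + (Q *ᵥ y - b) ⬝ᵥ (z - y)
      + (z - y) ⬝ᵥ Q *ᵥ (z - y) / 2 := by
  have hsymm := dotProduct_mulVec_comm_of_isSymm hQ y z
  simp only [mulVec_sub, dotProduct_sub, sub_dotProduct, dotProduct_comm (Q *ᵥ y)]
  linarith

section Spectral

variable [DecidableEq ι]

lemma smul_dotProduct_self_le (hμ : μ • 1 ≤ Q) (x : ι → ℝ) : μ * (x ⬝ᵥ x) ≤ x ⬝ᵥ Q *ᵥ x := by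
  simpa [sub_mulVec, smul_mulVec] using (le_iff.1 hμ).dotProduct_mulVec_nonneg x

lemma dotProduct_mulVec_le_self (hQ1 : Q ≤ 1) (x : ι → ℝ) : x ⬝ᵥ Q *ᵥ x ≤ x ⬝ᵥ x := by
  simpa [sub_mulVec] using (le_iff.1 hQ1).dotProduct_mulVec_nonneg x

-- Evaluating `0 ≤ Q` at `u - Qu` and `Q ≤ 1` at `Qu` gives `‖Qu‖² ≤ ⟨u, Qu⟩`.
lemma dotProduct_self_sub_mulVec_le (hQ0 : 0 ≤ Q) (hQ1 : Q ≤ 1) (u : ι → ℝ) :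
    (u - Q *ᵥ u) ⬝ᵥ (u - Q *ᵥ u) ≤ u ⬝ᵥ u := by
  have hpsd := nonneg_iff_posSemidef.1 hQ0
  have hu := hpsd.dotProduct_mulVec_nonneg u
  have hsub := hpsd.dotProduct_mulVec_nonneg (u - Q *ᵥ u)
  have hQu := dotProduct_mulVec_le_self hQ1 (Q *ᵥ u)
  have hsymm := dotProduct_mulVec_comm_of_isSymm (isSymm_of_le_one hQ1) u (Q *ᵥ u)
  simp only [star_trivial, mulVec_sub, dotProduct_sub, sub_dotProduct] at hu hsub ⊢
  linarith [dotProduct_comm u (Q *ᵥ u)]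

lemma neg_dotProduct_self_div_le_l1Quadratic (hμ0 : 0 < μ) (hμ : μ • 1 ≤ Q) (hw : 0 ≤ w)
    (b x : ι → ℝ) : -(b ⬝ᵥ b / (2 * μ)) ≤ l1Quadratic Q b w x := by
  have hl1 : 0 ≤ ∑ i, w i * |x i| := sum_nonneg fun i _ => mul_nonneg (hw i) (abs_nonneg _)
  have hsq : 0 ≤ (μ • x - b) ⬝ᵥ (μ • x - b) := dotProduct_self_star_nonneg _
  have hbx : b ⬝ᵥ x ≤ μ * (x ⬝ᵥ x) / 2 + b ⬝ᵥ b / (2 * μ) := by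
    simp only [dotProduct_sub, sub_dotProduct, smul_dotProduct, dotProduct_smul, smul_eq_mul,
      dotProduct_comm x b] at hsq
    rw [div_add_div _ _ two_ne_zero (by positivity), le_div_iff₀ (by positivity)]
    linarith
  unfold l1Quadratic
  linarith [smul_dotProduct_self_le hμ x]

lemma isProxGradMap_proxGradL1 (hμ : μ • 1 ≤ Q) (hQ1 : Q ≤ 1) (hw : 0 ≤ w) (b : ι → ℝ) :
    IsProxGradMap (E := EuclideanSpace ℝ ι) (fun x => l1Quadratic Q b w (ofLp x)) μ
      (fun y => toLp 2 (proxGradL1 Q b w (ofLp y))) := by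
  have hexp := quadratic_expansion (isSymm_of_le_one hQ1) b
  have hinner (x z : EuclideanSpace ℝ ι) : ⟪x, z⟫ = ofLp x ⬝ᵥ ofLp z := by
    rw [EuclideanSpace.inner_eq_star_dotProduct, star_trivial, dotProduct_comm]
  refine isProxGradMap_comp_sub (f := fun x => ofLp x ⬝ᵥ Q *ᵥ ofLp x / 2 - b ⬝ᵥ ofLp x)
    (g := fun x => ∑ i, w i * |x i|) (f' := fun y => toLp 2 (Q *ᵥ ofLp y - b))
    (P := fun x => toLp 2 fun i => softThreshold (w i) (x i)) (fun y z => ?_) (fun y z => ?_)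
    fun x z => ?_
  · rw [hexp (ofLp y) (ofLp z), hinner, ← real_inner_self_eq_norm_sq, hinner, ofLp_sub]
    linarith [smul_dotProduct_self_le hμ (ofLp z - ofLp y)]
  · rw [hexp (ofLp y) (ofLp z), hinner, ← real_inner_self_eq_norm_sq, hinner, ofLp_sub]
    linarith [dotProduct_mulVec_le_self hQ1 (ofLp z - ofLp y)]
  · rw [hinner, dotProduct, ← sum_add_distrib]
    exact sum_le_sum fun i _ => mul_abs_softThreshold_add_le (hw i)

lemma isKKTPoint_of_forall_le (hQ0 : 0 ≤ Q) (hQ1 : Q ≤ 1) (hw : 0 ≤ w)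
    (hs : ∀ z, l1Quadratic Q b w s ≤ l1Quadratic Q b w z) : IsKKTPoint Q b w s := by
  have hfix : proxGradL1 Q b w s = s :=
    congrArg ofLp ((isProxGradMap_proxGradL1 (μ := 0) (by simpa) hQ1 hw b).apply_eq_of_forall_le
      (s := toLp 2 s) fun z => hs (ofLp z))
  have hsoft (i : ι) : softThreshold (w i) (s i - (Q *ᵥ s - b) i) = s i := congrFun hfix i
  constructor <;> intro i
  · have h := abs_sub_softThreshold_le (w := s i - (Q *ᵥ s - b) i) (hw i)
    rwa [hsoft, sub_sub_cancel_left, abs_neg] at h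
  · have h := sub_softThreshold_mul_self (w := s i - (Q *ᵥ s - b) i) (hw i)
    rw [hsoft] at h
    linarith

end Spectral

section ZMatrix

lemma mulVec_nonpos_of_apply_eq_zero (hoff : Pairwise fun i j => Q i j ≤ 0) (hu : 0 ≤ u) {i : ι}
    (hi : u i = 0) : (Q *ᵥ u) i ≤ 0 := by
  refine sum_nonpos fun j _ => ?_
  rcases eq_or_ne i j with rfl | hij
  · rw [hi, mul_zero]
  · exact mul_nonpos_of_nonpos_of_nonneg (hoff hij) (hu j)

lemma posPart_dotProduct_mulVec_posPart_le (hoff : Pairwise fun i j => Q i j ≤ 0) (u : ι → ℝ) :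
    u⁺ ⬝ᵥ Q *ᵥ u⁺ ≤ u⁺ ⬝ᵥ Q *ᵥ u := by
  refine sum_le_sum fun i _ => ?_
  simp only [mulVec, dotProduct, mul_sum]
  refine sum_le_sum fun j _ => ?_
  rcases eq_or_ne i j with rfl | hij
  · rcases le_total (u i) 0 with h | h
    · simp [posPart_eq_zero.2 h]
    · simp [posPart_eq_self.2 h]
  · exact mul_le_mul_of_nonneg_left (mul_le_mul_of_nonpos_left (le_posPart (u j)) (hoff hij))
      (posPart_nonneg (u i))

lemma nonpos_of_mulVec_nonpos (hQ : Q.PosDef) (hoff : Pairwise fun i j => Q i j ≤ 0)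
    (hu : ∀ i, 0 < u i → (Q *ᵥ u) i ≤ 0) : u ≤ 0 := by
  by_contra h
  have hpos : 0 < u⁺ ⬝ᵥ Q *ᵥ u⁺ :=
    hQ.dotProduct_mulVec_pos (mt posPart_eq_zero.1 h)
  have hnonpos : u⁺ ⬝ᵥ Q *ᵥ u ≤ 0 := by
    refine sum_nonpos fun i _ => ?_
    rcases le_or_gt (u i) 0 with hi | hi
    · simp [posPart_eq_zero.2 hi]
    · exact mul_nonpos_of_nonneg_of_nonpos (posPart_nonneg (u i)) (hu i hi)
  linarith [posPart_dotProduct_mulVec_posPart_le hoff u]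

end ZMatrix

namespace IsKKTPoint

lemma grad_eq_neg_of_pos (h : IsKKTPoint Q b w s) {i : ι} (hi : 0 < s i) :
    (Q *ᵥ s - b) i = -w i := by
  have := h.grad_mul_self i
  rw [abs_of_pos hi, ← neg_mul] at this
  exact mul_right_cancel₀ hi.ne' this

lemma grad_eq_of_neg (h : IsKKTPoint Q b w s) {i : ι} (hi : s i < 0) :
    (Q *ᵥ s - b) i = w i := by
  have := h.grad_mul_self i
  rw [abs_of_neg hi, mul_neg, neg_neg] at this
  exact mul_right_cancel₀ hi.ne this

lemma nonneg (h : IsKKTPoint Q b w s) (hQ : Q.PosDef) (hoff : Pairwise fun i j => Q i j ≤ 0)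
    (hb : 0 ≤ b) : 0 ≤ s := by
  rw [← neg_nonpos]
  refine nonpos_of_mulVec_nonpos hQ hoff fun i hi => ?_
  have hgrad := h.grad_eq_of_neg (neg_pos.1 hi)
  have hwi := (abs_nonneg _).trans (h.abs_grad_le i)
  have hbi := hb i
  simp only [Pi.sub_apply, Pi.zero_apply, mulVec_neg, Pi.neg_apply] at *
  linarith

lemma le_of_weight_le (ha : IsKKTPoint Q b w a) (hs : IsKKTPoint Q b w' s) (hQ : Q.PosDef)
    (hoff : Pairwise fun i j => Q i j ≤ 0) (hb : 0 ≤ b) (hw : w ≤ w') : s ≤ a := by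
  rw [← sub_nonpos]
  refine nonpos_of_mulVec_nonpos hQ hoff fun i hi => ?_
  have hai := ha.nonneg hQ hoff hb i
  have hgrad_s := hs.grad_eq_neg_of_pos (hai.trans_lt (sub_pos.1 hi))
  have hgrad_a := (abs_le.1 (ha.abs_grad_le i)).1
  have hwi := hw i
  simp only [Pi.sub_apply, mulVec_sub] at *
  linarith

lemma eq_zero_of_weight_le (ha : IsKKTPoint Q b w a) (hs : IsKKTPoint Q b w' s) (hQ : Q.PosDef)
    (hoff : Pairwise fun i j => Q i j ≤ 0) (hb : 0 ≤ b) (hw : w ≤ w') {i : ι} (hi : a i = 0) :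
    s i = 0 :=
  le_antisymm (hi ▸ ha.le_of_weight_le hs hQ hoff hb hw i) (hs.nonneg hQ hoff hb i)

lemma abs_grad_le_of_weight_le (ha : IsKKTPoint Q b w a) (hs : IsKKTPoint Q b w' s)
    (hQ : Q.PosDef) (hoff : Pairwise fun i j => Q i j ≤ 0) (hb : 0 ≤ b) (hw : w ≤ w') {i : ι}
    (hi : a i = 0) : |(Q *ᵥ s - b) i| ≤ w i := by
  have hsi := ha.eq_zero_of_weight_le hs hQ hoff hb hw hi
  have hQs := mulVec_nonpos_of_apply_eq_zero hoff (hs.nonneg hQ hoff hb) hsi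
  have hQa := mulVec_nonpos_of_apply_eq_zero hoff (u := a - s) (i := i)
    (sub_nonneg.2 (ha.le_of_weight_le hs hQ hoff hb hw)) (by simp [hi, hsi])
  have hgrad := abs_le.1 (ha.abs_grad_le i)
  have hbi := hb i
  simp only [Pi.sub_apply, mulVec_sub, Pi.zero_apply] at *
  exact abs_le.2 ⟨by linarith, by linarith⟩

-- A coordinate that is inactive at `a` has a prox-gradient input of size at most `w i` at the fixed
-- point `s`, but one of size more than `w' i` at `y` if it is activated there; the two inputs
-- differ by `((1 - Q) (y - s)) i`.
lemma weight_sub_le_abs (ha : IsKKTPoint Q b w a) (hs : IsKKTPoint Q b w' s) (hQ : Q.PosDef)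
    (hoff : Pairwise fun i j => Q i j ≤ 0) (hb : 0 ≤ b) (hw : w ≤ w') {i : ι} (hi : a i = 0)
    (hy : proxGradL1 Q b w' y i ≠ 0) : w' i - w i ≤ |(y - s - Q *ᵥ (y - s)) i| := by
  have hactive : w' i < |y i - (Q *ᵥ y - b) i| :=
    not_le.1 (mt softThreshold_eq_zero hy)
  have hdiff : (y - s - Q *ᵥ (y - s)) i = y i - (Q *ᵥ y - b) i - -(Q *ᵥ s - b) i := by
    simp only [Pi.sub_apply, mulVec_sub, ha.eq_zero_of_weight_le hs hQ hoff hb hw hi]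
    ring
  have hmargin := abs_sub_abs_le_abs_sub (y i - (Q *ᵥ y - b) i) (-(Q *ᵥ s - b) i)
  rw [abs_neg, ← hdiff] at hmargin
  linarith [ha.abs_grad_le_of_weight_le hs hQ hoff hb hw hi]

lemma sum_weight_sub_sq_le [DecidableEq ι] (ha : IsKKTPoint Q b w a)
    (hs : IsKKTPoint Q b w' s) (hQ : Q.PosDef) (hQ1 : Q ≤ 1)
    (hoff : Pairwise fun i j => Q i j ≤ 0) (hb : 0 ≤ b) (hw : w ≤ w') {S : Finset ι}
    (hS : ∀ i ∈ S, proxGradL1 Q b w' y i ≠ 0 ∧ a i = 0) :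
    ∑ i ∈ S, (w' i - w i) ^ 2 ≤ (y - s) ⬝ᵥ (y - s) := by
  set u := y - s
  calc ∑ i ∈ S, (w' i - w i) ^ 2
      ≤ ∑ i ∈ S, (u - Q *ᵥ u) i * (u - Q *ᵥ u) i := by
        refine sum_le_sum fun i hi => ?_
        rw [← sq, ← sq_abs ((u - Q *ᵥ u) i)]
        exact pow_le_pow_left₀ (sub_nonneg.2 (hw i))
          (ha.weight_sub_le_abs hs hQ hoff hb hw (hS i hi).2 (hS i hi).1) 2
    _ ≤ (u - Q *ᵥ u) ⬝ᵥ (u - Q *ᵥ u) :=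
        sum_le_sum_of_subset_of_nonneg (subset_univ S) fun i _ _ => mul_self_nonneg _
    _ ≤ u ⬝ᵥ u := dotProduct_self_sub_mulVec_le hQ.posSemidef.nonneg hQ1 u

end IsKKTPoint

namespace IsFISTA

variable [DecidableEq ι] {x y : ℕ → ι → ℝ}

lemma sqrt_dotProduct_self_le (h : IsFISTA (proxGradL1 Q b w) ((1 - √μ) / (1 + √μ)) x y)
    (hx : x 0 = 0) (hμ0 : 0 < μ) (hμ1 : μ ≤ 1) (hμ : μ • 1 ≤ Q) (hQ1 : Q ≤ 1) (hw : 0 ≤ w)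
    (hs : ∀ z, l1Quadratic Q b w s ≤ l1Quadratic Q b w z) (k : ℕ) :
    √((y k - s) ⬝ᵥ (y k - s)) ≤ 3 * √2 * √(b ⬝ᵥ b) / μ * √(1 - √μ) ^ k := by
  set L := (WithLp.linearEquiv 2 ℝ (ι → ℝ)).symm
  have hT := isProxGradMap_proxGradL1 (μ := √μ ^ 2) (by rwa [Real.sq_sqrt hμ0.le]) hQ1 hw b
  have hdist := (h.map L).norm_y_sub_le hT (Real.sqrt_pos.2 hμ0) (Real.sqrt_le_one.2 hμ1)
    (s := L s) (fun z => hs (ofLp z)) k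
  have hgap : l1Quadratic Q b w (x 0) - l1Quadratic Q b w s ≤ b ⬝ᵥ b / (2 * μ) := by
    rw [hx, l1Quadratic_zero]
    linarith [neg_dotProduct_self_div_le_l1Quadratic hμ0 hμ hw b s]
  have hnorm : √((y k - s) ⬝ᵥ (y k - s)) = ‖L (y k) - L s‖ := by
    rw [← map_sub, EuclideanSpace.norm_eq]
    simp [dotProduct, sq, L]
  calc √((y k - s) ⬝ᵥ (y k - s))
      ≤ 6 * √(l1Quadratic Q b w (x 0) - l1Quadratic Q b w s) / √μ * √(1 - √μ) ^ k :=
        hnorm.trans_le hdist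
    _ ≤ 6 * √(b ⬝ᵥ b / (2 * μ)) / √μ * √(1 - √μ) ^ k := by gcongr
    _ = 3 * √2 * √(b ⬝ᵥ b) / μ * √(1 - √μ) ^ k := by
        rw [Real.sqrt_div' _ (by positivity), Real.sqrt_mul zero_le_two]
        field_simp
        rw [Real.sq_sqrt zero_le_two, Real.sq_sqrt hμ0.le]
        ring

lemma sqrt_sum_weight_sub_sq_le (h : IsFISTA (proxGradL1 Q b w') ((1 - √μ) / (1 + √μ)) x y)
    (hx : x 0 = 0) (hμ0 : 0 < μ) (hμ1 : μ ≤ 1) (hμ : μ • 1 ≤ Q) (hQ1 : Q ≤ 1)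
    (hoff : Pairwise fun i j => Q i j ≤ 0) (hb : 0 ≤ b) (hw : 0 ≤ w) (hww' : w ≤ w')
    (ha : ∀ z, l1Quadratic Q b w a ≤ l1Quadratic Q b w z)
    (hs : ∀ z, l1Quadratic Q b w' s ≤ l1Quadratic Q b w' z) {k : ℕ} {S : Finset ι}
    (hS : ∀ i ∈ S, x (k + 1) i ≠ 0 ∧ a i = 0) :
    √(∑ i ∈ S, (w' i - w i) ^ 2) ≤ 3 * √2 * √(b ⬝ᵥ b) / μ * √(1 - √μ) ^ k := by
  have hQ := posDef_of_smul_one_le hμ0 hμ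
  have hQ0 := hQ.posSemidef.nonneg
  have hw' := hw.trans hww'
  refine (Real.sqrt_le_sqrt ?_).trans (h.sqrt_dotProduct_self_le hx hμ0 hμ1 hμ hQ1 hw' hs k)
  exact (isKKTPoint_of_forall_le hQ0 hQ1 hw ha).sum_weight_sub_sq_le
    (isKKTPoint_of_forall_le hQ0 hQ1 hw' hs) hQ hQ1 hoff hb hww'
    (by simpa only [h.x_succ] using hS)

end IsFISTA

end L1Quadratic

section PageRank

variable {n : ℕ} {A : Matrix (Fin n) (Fin n) ℝ} {α ε ρ ρ' : ℝ} {v : Fin n}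

/-- `A` is the weighted adjacency matrix of a finite undirected graph without isolated vertices;
loops are allowed. -/
structure IsWeightedGraph (A : Matrix (Fin n) (Fin n) ℝ) : Prop where
  symm : ∀ i j, A i j = A j i
  nonneg : ∀ i j, 0 ≤ A i j
  deg_pos : ∀ i, 0 < deg A i

/-- The normalized adjacency matrix `D^{-1/2} A D^{-1/2}`. -/
def normAdj (A : Matrix (Fin n) (Fin n) ℝ) : Matrix (Fin n) (Fin n) ℝ :=
  of fun i j => A i j / (√(deg A i) * √(deg A j))

/-- The linear term `α D^{-1/2} e_v` of the PageRank objective with seed vertex `v`. -/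
def seedVec (A : Matrix (Fin n) (Fin n) ℝ) (α : ℝ) (v : Fin n) : Fin n → ℝ :=
  Pi.single v (α / √(deg A v))

/-- The weights of the regularizer `αρ‖D^{1/2}x‖₁`. -/
def degWeight (A : Matrix (Fin n) (Fin n) ℝ) (α ρ : ℝ) : Fin n → ℝ := fun i => α * ρ * √(deg A i)

namespace IsGraph

lemma isWeightedGraph (hA : IsGraph A) : IsWeightedGraph A where
  symm := hA.symm
  nonneg i j := by rcases hA.zero_one i j with h | h <;> simp [h]
  deg_pos := hA.deg_pos

lemma one_le_deg (hA : IsGraph A) (i : Fin n) : 1 ≤ deg A i := by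
  obtain ⟨j, -, hj⟩ := exists_ne_zero_of_sum_ne_zero (hA.deg_pos i).ne'
  have hj1 : A i j = 1 := (hA.zero_one i j).resolve_left hj
  exact hj1 ▸ single_le_sum (fun k _ => hA.isWeightedGraph.nonneg i k) (mem_univ j)

end IsGraph

lemma Qmat_eq_smul_one_sub (A : Matrix (Fin n) (Fin n) ℝ) (α : ℝ) :
    Qmat A α = ((1 + α) / 2) • 1 - ((1 - α) / 2) • normAdj A := by
  ext i j
  simp [Qmat, normAdj, one_apply, mul_div_assoc]

lemma gradf_eq_mulVec_sub_seedVec (A : Matrix (Fin n) (Fin n) ℝ) (α : ℝ) (v : Fin n)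
    (x : Fin n → ℝ) : gradf A α v x = Qmat A α *ᵥ x - seedVec A α v := by
  ext i
  simp [gradf, seedVec, Pi.single_apply, div_eq_mul_inv]

lemma Freg_eq_l1Quadratic (A : Matrix (Fin n) (Fin n) ℝ) (α : ℝ) (v : Fin n) (ρ : ℝ)
    (x : Fin n → ℝ) :
    Freg A α v ρ x = l1Quadratic (Qmat A α) (seedVec A α v) (degWeight A α ρ) x := by
  have hseed : seedVec A α v ⬝ᵥ x = α * (x v / √(deg A v)) := by
    rw [seedVec, single_dotProduct]
    ring
  have hl1 : ∑ i, degWeight A α ρ i * |x i| = α * ρ * l1w A x := by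
    simp only [degWeight, l1w, mul_sum, mul_assoc]
  rw [Freg, fPR, l1Quadratic, hseed, hl1, dotProduct, one_div_mul_eq_div]

lemma softT_sub_gradf_eq_proxGradL1 (A : Matrix (Fin n) (Fin n) ℝ) (α : ℝ) (v : Fin n) (ρ : ℝ)
    (y : Fin n → ℝ) : softT A (α * ρ) (y - gradf A α v y) =
      proxGradL1 (Qmat A α) (seedVec A α v) (degWeight A α ρ) y := by
  rw [gradf_eq_mulVec_sub_seedVec]
  rfl

lemma seedVec_dotProduct_self (hv : 0 < deg A v) :
    seedVec A α v ⬝ᵥ seedVec A α v = α ^ 2 / deg A v := by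
  simp [seedVec, ← sq, div_pow, Real.sq_sqrt hv.le]

lemma seedVec_nonneg (hα : 0 ≤ α) : 0 ≤ seedVec A α v :=
  Pi.single_nonneg.2 (by positivity)

lemma degWeight_nonneg (hα : 0 ≤ α) (hρ : 0 ≤ ρ) : 0 ≤ degWeight A α ρ :=
  fun _ => by unfold degWeight; positivity

namespace IsWeightedGraph

lemma posSemidef_diagonal_deg_add_smul (hA : IsWeightedGraph A) (hε : |ε| ≤ 1) :
    (diagonal (deg A) + ε • A).PosSemidef := by
  refine .of_dotProduct_mulVec_nonneg ?_ fun x => ?_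
  · exact (isHermitian_diagonal _).add (IsHermitian.ext fun i j => by simp [hA.symm i j])
  have hrow : ∑ i, deg A i * x i ^ 2 = ∑ i, ∑ j, A i j * x i ^ 2 := by
    simp only [deg, sum_mul]
  have hcol : ∑ i, deg A i * x i ^ 2 = ∑ i, ∑ j, A i j * x j ^ 2 := by
    rw [hrow, sum_comm]
    simp only [hA.symm]
  have hform : x ⬝ᵥ (diagonal (deg A) + ε • A) *ᵥ x =
      ∑ i, deg A i * x i ^ 2 + ε * ∑ i, ∑ j, A i j * (x i * x j) := by
    rw [add_mulVec, dotProduct_add, smul_mulVec, dotProduct_smul, smul_eq_mul]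
    congr 1
    · simp only [dotProduct, mulVec_diagonal]
      exact sum_congr rfl fun i _ => by ring
    · simp only [dotProduct, mulVec, mul_sum]
      exact sum_congr rfl fun i _ => sum_congr rfl fun j _ => by ring
  have hsum : 2 * (x ⬝ᵥ (diagonal (deg A) + ε • A) *ᵥ x) =
      ∑ i, ∑ j, A i j * (x i ^ 2 + 2 * ε * (x i * x j) + x j ^ 2) := by
    rw [hform]
    simp only [mul_add, sum_add_distrib, ← hrow, ← hcol, mul_left_comm _ (2 * ε), ← mul_sum]
    ring
  have hnonneg : 0 ≤ ∑ i, ∑ j, A i j * (x i ^ 2 + 2 * ε * (x i * x j) + x j ^ 2) := by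
    refine sum_nonneg fun i _ => sum_nonneg fun j _ => mul_nonneg (hA.nonneg i j) ?_
    nlinarith [sq_nonneg (x i + ε * x j), sq_nonneg (x j), (sq_le_one_iff_abs_le_one ε).2 hε]
  rw [star_trivial]
  linarith

lemma posSemidef_one_add_smul_normAdj (hA : IsWeightedGraph A) (hε : |ε| ≤ 1) :
    (1 + ε • normAdj A).PosSemidef := by
  set S : Matrix (Fin n) (Fin n) ℝ := diagonal fun i => (√(deg A i))⁻¹
  have hdeg : S * diagonal (deg A) * S = 1 := by
    rw [diagonal_mul_diagonal, diagonal_mul_diagonal, diagonal_eq_one]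
    ext i
    have hd := Real.sqrt_pos.2 (hA.deg_pos i)
    rw [Pi.one_apply, inv_mul_eq_div, ← div_eq_mul_inv, Real.div_sqrt, div_self hd.ne']
  have hadj : S * A * S = normAdj A := by
    ext i j
    simp only [S, diagonal_mul, mul_diagonal, normAdj, of_apply]
    field_simp
  have hconj : Sᴴ * (diagonal (deg A) + ε • A) * S = 1 + ε • normAdj A := by
    rw [diagonal_conjTranspose, star_trivial, mul_add, add_mul, hdeg, mul_smul_comm,
      smul_mul_assoc, hadj]
  exact hconj ▸ (hA.posSemidef_diagonal_deg_add_smul hε).conjTranspose_mul_mul_same S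

lemma smul_one_le_Qmat (hA : IsWeightedGraph A) (hα1 : α ≤ 1) : α • 1 ≤ Qmat A α := by
  have hN := hA.posSemidef_one_add_smul_normAdj (ε := -1) (by simp)
  have hQ : Qmat A α - α • 1 = ((1 - α) / 2) • (1 + (-1 : ℝ) • normAdj A) := by
    rw [Qmat_eq_smul_one_sub]
    module
  rw [le_iff, hQ]
  exact hN.smul (by linarith)

lemma Qmat_le_one (hA : IsWeightedGraph A) (hα1 : α ≤ 1) : Qmat A α ≤ 1 := by
  have hN := hA.posSemidef_one_add_smul_normAdj (ε := 1) (by simp)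
  have hQ : 1 - Qmat A α = ((1 - α) / 2) • (1 + (1 : ℝ) • normAdj A) := by
    rw [Qmat_eq_smul_one_sub]
    module
  rw [le_iff, hQ]
  exact hN.smul (by linarith)

lemma pairwise_Qmat_nonpos (hA : IsWeightedGraph A) (hα1 : α ≤ 1) :
    Pairwise fun i j => Qmat A α i j ≤ 0 := by
  intro i j hij
  have hAij := hA.nonneg i j
  rw [Qmat, if_neg hij, zero_sub, neg_nonpos]
  positivity

lemma volS_nonneg (hA : IsWeightedGraph A) (S : Set (Fin n)) : 0 ≤ volS A S :=
  sum_nonneg fun i _ => (hA.deg_pos i).le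

lemma volS_mono (hA : IsWeightedGraph A) {S U : Set (Fin n)} (h : S ⊆ U) : volS A S ≤ volS A U :=
  sum_le_sum_of_subset_of_nonneg (by gcongr) fun i _ _ => (hA.deg_pos i).le

lemma sum_degWeight_sub_sq (hA : IsWeightedGraph A) (α ρ ρ' : ℝ) (S : Set (Fin n))
    [DecidablePred (· ∈ S)] : ∑ i with i ∈ S, (degWeight A α ρ' i - degWeight A α ρ i) ^ 2 =
      ((ρ' - ρ) * α) ^ 2 * volS A S := by
  rw [volS, mul_sum]
  refine sum_congr (by congr) fun i _ => ?_
  rw [degWeight, degWeight, ← sub_mul, mul_pow, Real.sq_sqrt (hA.deg_pos i).le]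
  ring

end IsWeightedGraph

lemma half_le_one_sub_sqrt_one_sub {t : ℝ} (ht : t ≤ 1) : t / 2 ≤ 1 - √(1 - t) := by
  have h := Real.sqrt_one_add_le (neg_le_neg ht)
  rw [← sub_eq_add_neg] at h
  linarith

section SpuriousWork

variable {xA xB : Fin n → ℝ} {x y : ℕ → Fin n → ℝ}

lemma IsWeightedGraph.sqrt_volS_spurious_le (hA : IsWeightedGraph A) (hα : 0 < α) (hα1 : α ≤ 1)
    (hρ : 0 ≤ ρ) (hρρ' : ρ < ρ') (hxA : ∀ z, Freg A α v ρ xA ≤ Freg A α v ρ z)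
    (hxB : ∀ z, Freg A α v ρ' xB ≤ Freg A α v ρ' z)
    (h : IsFISTA (fun y => softT A (α * ρ') (y - gradf A α v y)) ((1 - √α) / (1 + √α)) x y)
    (hx : x 0 = 0) (k : ℕ) :
    √(volS A (Function.support (x (k + 1)) ∩ (Function.support xA)ᶜ)) ≤
      3 * √2 / (√(deg A v) * ((ρ' - ρ) * α)) * √(1 - √α) ^ k := by
  classical
  set S := Function.support (x (k + 1)) ∩ (Function.support xA)ᶜ
  have hgap : 0 < ρ' - ρ := sub_pos.2 hρρ'
  have hd := hA.deg_pos v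
  have hweight : degWeight A α ρ ≤ degWeight A α ρ' := fun i => by unfold degWeight; gcongr
  simp only [Freg_eq_l1Quadratic, softT_sub_gradf_eq_proxGradL1] at hxA hxB h
  have hbound := h.sqrt_sum_weight_sub_sq_le hx hα hα1 (hA.smul_one_le_Qmat hα1)
    (hA.Qmat_le_one hα1) (hA.pairwise_Qmat_nonpos hα1) (seedVec_nonneg hα.le)
    (degWeight_nonneg hα.le hρ) hweight hxA hxB (k := k) (S := {i | i ∈ S}) (by simp [S])
  have hvol : √(∑ i with i ∈ S, (degWeight A α ρ' i - degWeight A α ρ i) ^ 2) =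
      (ρ' - ρ) * α * √(volS A S) := by
    rw [hA.sum_degWeight_sub_sq, Real.sqrt_mul (sq_nonneg _), Real.sqrt_sq (by positivity)]
  rw [hvol, seedVec_dotProduct_self hd, Real.sqrt_div (sq_nonneg α), Real.sqrt_sq hα.le] at hbound
  calc √(volS A S) = (ρ' - ρ) * α * √(volS A S) / ((ρ' - ρ) * α) := by field_simp
    _ ≤ 3 * √2 * (α / √(deg A v)) / α * √(1 - √α) ^ k / ((ρ' - ρ) * α) := by gcongr
    _ = 3 * √2 / (√(deg A v) * ((ρ' - ρ) * α)) * √(1 - √α) ^ k := by field_simp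

theorem fista_spurious_work_bound_general {B : Set (Fin n)} (hA : IsWeightedGraph A) (hα : 0 < α)
    (hα1 : α ≤ 1) (hρ : 0 ≤ ρ) (hρρ' : ρ < ρ')
    (hxA : ∀ z, Freg A α v ρ xA ≤ Freg A α v ρ z)
    (hxB : ∀ z, Freg A α v ρ' xB ≤ Freg A α v ρ' z)
    (h : IsFISTA (fun y => softT A (α * ρ') (y - gradf A α v y)) ((1 - √α) / (1 + √α)) x y)
    (hx : x 0 = 0)
    (hB : ∀ k, Function.support (x (k + 1)) ∩ (Function.support xA)ᶜ ⊆ B) :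
    Summable (fun k => volS A (Function.support (x (k + 1)) ∩ (Function.support xA)ᶜ)) ∧
      ∑' k, volS A (Function.support (x (k + 1)) ∩ (Function.support xA)ᶜ) ≤
        6 * √2 * √(volS A B) / (√(deg A v) * ((ρ' - ρ) * α * √α)) := by
  set r := √(1 - √α)
  set K := 3 * √2 / (√(deg A v) * ((ρ' - ρ) * α))
  have hgap : √α / 2 ≤ 1 - r := half_le_one_sub_sqrt_one_sub (Real.sqrt_le_one.2 hα1)
  have hα0 := Real.sqrt_pos.2 hα
  have hr : r < 1 := by linarith
  have hK : 0 ≤ K := by have := sub_pos.2 hρρ'; positivity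
  have hstep (k : ℕ) : volS A (Function.support (x (k + 1)) ∩ (Function.support xA)ᶜ) ≤
      √(volS A B) * K * r ^ k := by
    rw [← Real.mul_self_sqrt (hA.volS_nonneg _), mul_assoc]
    exact mul_le_mul (Real.sqrt_le_sqrt (hA.volS_mono (hB k)))
      (hA.sqrt_volS_spurious_le hα hα1 hρ hρρ' hxA hxB h hx k) (Real.sqrt_nonneg _)
      (Real.sqrt_nonneg _)
  have hgeom := (summable_geometric_of_lt_one (Real.sqrt_nonneg _) hr).mul_left (√(volS A B) * K)
  have hsummable := hgeom.of_nonneg_of_le (fun _ => hA.volS_nonneg _) hstep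
  refine ⟨hsummable, ?_⟩
  calc _ ≤ ∑' k, √(volS A B) * K * r ^ k := hsummable.tsum_le_tsum hstep hgeom
    _ = √(volS A B) * K * (1 - r)⁻¹ := by
        rw [tsum_mul_left, tsum_geometric_of_lt_one (Real.sqrt_nonneg _) hr]
    _ ≤ √(volS A B) * K * (√α / 2)⁻¹ :=
        mul_le_mul_of_nonneg_left (inv_anti₀ (half_pos hα0) hgap)
          (mul_nonneg (Real.sqrt_nonneg _) hK)
    _ = _ := by
        simp only [K]
        field_simp
        ring

end SpuriousWork

end PageRank

/-- Total spurious work bound: run FISTA (η = 1, β = (1−√α)/(1+√α),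
x₋₁ = x₀ = 0) on `F_{2ρ} = f + g_B`. If the spurious active sets
`Ã_k = supp(x_{k+1}) ∩ S_Aᶜ` satisfy `Ã_k ⊆ 𝓑` for all `k`, then there is an absolute
constant `C > 0` such that `∑_{k=0}^∞ vol(Ã_k) ≤ C·√(vol 𝓑)/(ρ·α^{3/2})`. -/
theorem fista_spurious_work_bound :
    ∃ C : ℝ, 0 < C ∧
      ∀ (n : ℕ) (A : Matrix (Fin n) (Fin n) ℝ) (α ρ : ℝ) (v : Fin n)
        (xA xB : Fin n → ℝ) (x y : ℕ → Fin n → ℝ) (β : ℝ) (B : Set (Fin n)),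
        IsGraph A → 0 < α → α ≤ 1 → 0 < ρ →
        -- xA is the minimizer of problem (A) `F_ρ`, xB of problem (B) `F_{2ρ}`
        (∀ z, Freg A α v ρ xA ≤ Freg A α v ρ z) →
        (∀ z, Freg A α v (2 * ρ) xB ≤ Freg A α v (2 * ρ) z) →
        -- FISTA iterates on problem (B), x₋₁ = x₀ = 0 (hence y₀ = 0)
        β = (1 - Real.sqrt α) / (1 + Real.sqrt α) →
        x 0 = 0 → y 0 = 0 →
        (∀ k, x (k + 1) = softT A (2 * α * ρ) (fun i => y k i - gradf A α v (y k) i)) →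
        (∀ k, y (k + 1) = fun i => x (k + 1) i + β * (x (k + 1) i - x k i)) →
        -- confinement: Ã_k = supp(x_{k+1}) ∩ S_Aᶜ ⊆ 𝓑 for all k
        (∀ k : ℕ, Function.support (x (k + 1)) ∩ (Function.support xA)ᶜ ⊆ B) →
        ∑' k : ℕ, volS A (Function.support (x (k + 1)) ∩ (Function.support xA)ᶜ) ≤
          C * Real.sqrt (volS A B) / (ρ * α * Real.sqrt α) := by
  refine ⟨6 * √2, by positivity, ?_⟩
  intro n A α ρ v xA xB x y β B hG hα hα1 hρ hxA hxB hβ hx hy hx_succ hy_succ hB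
  have hfista : IsFISTA (fun y => softT A (α * (2 * ρ)) (y - gradf A α v y))
      ((1 - √α) / (1 + √α)) x y :=
    { y_zero := hy.trans hx.symm
      x_succ := fun k => by rw [hx_succ, mul_left_comm, mul_assoc]; rfl
      y_succ := fun k => by rw [hy_succ, hβ]; rfl }
  refine (fista_spurious_work_bound_general hG.isWeightedGraph hα hα1 hρ.le (by linarith) hxA hxB
    hfista hx hB).2.trans ?_
  have hd : 1 ≤ √(deg A v) := Real.one_le_sqrt.2 (hG.one_le_deg v)
  rw [two_mul, add_sub_cancel_right]
  refine div_le_div_of_nonneg_left (by positivity) (by positivity) ?_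
  exact le_mul_of_one_le_left (by positivity) hd
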